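/- Let α, β > -1 and s ∈ ℕ. Suppose either (a) θ ∈ (-1,1), or (b) θ = -1 and β < 1, or (c) θ = 1 and α < 1. Then there is a constant c > 0 independent of f and n such that for every f ∈ W_2^s(w_{α,β}) and every n ≥ s, ‖f - 𝒮_{n,θ}^{α-s,β-s} f‖_{W_2^s(w_{α,β})} ≤ c · E_{n-s}(f^{(s)})_{L^2(w_{α,β})}. -/

import Mathlib

open MeasureTheory Set ENNReal NNReal

noncomputable section

namespace JacobiApprox

/-- The Jacobi weight `w_{α,β}(x) = (1-x)^α (1+x)^β` on `(-1,1)`. -/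
def w (α β x : ℝ) : ℝ := (1 - x) ^ α * (1 + x) ^ β

/-- The weighted `L^p` norm `‖f‖_{L^p(w_{α,β})}`; for `p = ∞` it is the uniform
norm on `[-1,1]`. -/
def LpW (α β : ℝ) (p : ℝ≥0∞) (f : ℝ → ℝ) : ℝ :=
  if p = ⊤ then sSup ((fun x => |f x|) '' Icc (-1 : ℝ) 1)
  else (∫ x in Ioo (-1 : ℝ) 1, |f x| ^ p.toReal * w α β x) ^ (1 / p.toReal)

/-- Membership in `L^p(w_{α,β})` (`f ∈ C[-1,1]` when `p = ∞`). -/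
def MemLpW (α β : ℝ) (p : ℝ≥0∞) (f : ℝ → ℝ) : Prop :=
  Measurable f ∧
    (p ≠ ⊤ → IntegrableOn (fun x => |f x| ^ p.toReal * w α β x) (Ioo (-1 : ℝ) 1)) ∧
    (p = ⊤ → ContinuousOn f (Icc (-1 : ℝ) 1))

/-- `E_n(f)_{L^p(w_{α,β})}`: the error of best approximation of `f` by polynomials
of degree at most `n` in `L^p(w_{α,β})`. -/
def E (α β : ℝ) (p : ℝ≥0∞) (n : ℕ) (f : ℝ → ℝ) : ℝ :=
  sInf {r : ℝ | ∃ q : Polynomial ℝ, q.natDegree ≤ n ∧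
    r = LpW α β p (fun x => f x - q.eval x)}

/-- Membership in the Sobolev space `W_p^s(w_{α,β})`: `f` has `s` continuous
derivatives and `f^{(s)} ∈ L^p(w_{α,β})` (for `p = ∞` this is `f ∈ C^s[-1,1]`). -/
def MemW (α β : ℝ) (p : ℝ≥0∞) (s : ℕ) (f : ℝ → ℝ) : Prop :=
  ContDiff ℝ (s : ℕ∞) f ∧
    (p ≠ ⊤ → IntegrableOn (fun x => |iteratedDeriv s f x| ^ p.toReal * w α β x)
      (Ioo (-1 : ℝ) 1))

/-- The Sobolev norm `‖f‖_{W_p^s(w_{α,β})}` (max over derivatives when `p = ∞`). -/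
def WNorm (α β : ℝ) (p : ℝ≥0∞) (s : ℕ) (f : ℝ → ℝ) : ℝ :=
  if p = ⊤ then
    (Finset.range (s + 1)).sup' (Finset.nonempty_range_iff.mpr (Nat.succ_ne_zero s))
      (fun k => LpW α β ⊤ (iteratedDeriv k f))
  else (∑ k ∈ Finset.range (s + 1), (LpW α β p (iteratedDeriv k f)) ^ p.toReal) ^
    (1 / p.toReal)

/-- Pochhammer symbol (rising factorial) `(a)_k`. -/
def poch (a : ℝ) (k : ℕ) : ℝ := ∏ i ∈ Finset.range k, (a + i)

/-- The Jacobi polynomial `P_n^{(α,β)}`. -/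
def JP (α β : ℝ) (n : ℕ) (t : ℝ) : ℝ :=
  (poch (α + 1) n / n.factorial) *
    ∑ k ∈ Finset.range (n + 1),
      poch (-(n : ℝ)) k * poch ((n : ℝ) + α + β + 1) k /
        (poch (α + 1) k * k.factorial) * ((1 - t) / 2) ^ k

/-- The renormalized Jacobi polynomial `J_n^{α,β} = 2^n/(n+α+β+1)_n · P_n^{(α,β)}`. -/
def J (α β : ℝ) (n : ℕ) (t : ℝ) : ℝ :=
  2 ^ n / poch ((n : ℝ) + α + β + 1) n * JP α β n t

/-- The inner product `⟨f,g⟩_{α,β} = ∫_{-1}^1 f g w_{α,β}`. -/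
def ip (α β : ℝ) (f g : ℝ → ℝ) : ℝ := ∫ x in Ioo (-1 : ℝ) 1, f x * g x * w α β x

/-- `h_n^{α,β} = ⟨J_n^{α,β}, J_n^{α,β}⟩_{α,β}`. -/
def hJ (α β : ℝ) (n : ℕ) : ℝ := ip α β (J α β n) (J α β n)

/-- The Fourier–Jacobi coefficient `\hat f_n^{α,β}`. -/
def coeff (α β : ℝ) (n : ℕ) (f : ℝ → ℝ) : ℝ := ip α β f (J α β n) / hJ α β n

/-- The `n`-th partial sum `S_n^{α,β} f` of the Fourier–Jacobi series. -/
def S (α β : ℝ) (n : ℕ) (f : ℝ → ℝ) (x : ℝ) : ℝ :=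
  ∑ k ∈ Finset.range (n + 1), coeff α β k f * J α β k x

/-- An admissible cut-off function: `C^∞`, `η ≡ 1` on `[0,1]`, `η ≡ 0` on `[2,∞)`. -/
def Admissible (η : ℝ → ℝ) : Prop :=
  ContDiff ℝ (⊤ : ℕ∞) η ∧ (∀ t : ℝ, 0 ≤ t → t ≤ 1 → η t = 1) ∧ ∀ t : ℝ, 2 ≤ t → η t = 0

/-- The de la Vallée Poussin type operator `V_n^{α,β} f`. -/
def V (η : ℝ → ℝ) (α β : ℝ) (n : ℕ) (f : ℝ → ℝ) (x : ℝ) : ℝ :=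
  ∑ k ∈ Finset.range (2 * n + 1), η ((k : ℝ) / (n : ℝ)) * coeff α β k f * J α β k x

/-- The Sobolev orthogonal polynomial `𝒥_{n,θ}^{α-s,β-s}`. -/
def SJ (α β : ℝ) (s : ℕ) (θ : ℝ) (n : ℕ) (x : ℝ) : ℝ :=
  if n < s then (x - θ) ^ n / n.factorial
  else ∫ t in θ..x, (x - t) ^ (s - 1) / (s - 1).factorial * J α β (n - s) t

/-- The Sobolev inner product `⟨f,g⟩_{α,β}^{-s}`. -/
def ipS (α β : ℝ) (s : ℕ) (θ : ℝ) (lam : ℕ → ℝ) (f g : ℝ → ℝ) : ℝ :=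
  ip α β (iteratedDeriv s f) (iteratedDeriv s g) +
    ∑ k ∈ Finset.range s, lam k * iteratedDeriv k f θ * iteratedDeriv k g θ

/-- The Fourier coefficient `\hat{𝔣}_n^{α-s,β-s}` in the Sobolev orthogonal system. -/
def coeffS (α β : ℝ) (s : ℕ) (θ : ℝ) (lam : ℕ → ℝ) (n : ℕ) (f : ℝ → ℝ) : ℝ :=
  ipS α β s θ lam f (SJ α β s θ n) / ipS α β s θ lam (SJ α β s θ n) (SJ α β s θ n)

/-- The `n`-th partial sum `𝒮_{n,θ}^{α-s,β-s} f` of the Sobolev orthogonal expansion. -/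
def SS (α β : ℝ) (s : ℕ) (θ : ℝ) (lam : ℕ → ℝ) (n : ℕ) (f : ℝ → ℝ) (x : ℝ) : ℝ :=
  ∑ k ∈ Finset.range (n + 1), coeffS α β s θ lam k f * SJ α β s θ k x

/-- The operator `𝒱_{n,θ}^{α-s,β-s} f`. -/
def VS (η : ℝ → ℝ) (α β : ℝ) (s : ℕ) (θ : ℝ) (n : ℕ) (f : ℝ → ℝ) (x : ℝ) : ℝ :=
  (∑ k ∈ Finset.range s, iteratedDeriv k f θ * (x - θ) ^ k / k.factorial) +
    ∫ t in θ..x, (x - t) ^ (s - 1) / (s - 1).factorial *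
      V η α β n (iteratedDeriv s f) t

/-- `A_j^{α,β} = (α+β+2)_{2j}/(α+1)_j`. -/
def Acoef (α β : ℝ) (j : ℕ) : ℝ := poch (α + β + 2) (2 * j) / poch (α + 1) j

/-- `B_n^{α,β} = (α+1)_{n+1}/(α+β+2)_{2n+1}`. -/
def Bcoef (α β : ℝ) (n : ℕ) : ℝ := poch (α + 1) (n + 1) / poch (α + β + 2) (2 * n + 1)

/-- `D_j^{α,β} = (j+β+1)/((2j+α+β+2)(2j+α+β+3))`. -/
def Dcoef (α β : ℝ) (j : ℕ) : ℝ :=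
  ((j : ℝ) + β + 1) / ((2 * (j : ℝ) + α + β + 2) * (2 * (j : ℝ) + α + β + 3))

/-- The function `u_{g,k}` of the Aubin–Nitsche duality argument. -/
def u (α β : ℝ) (s k : ℕ) (g : ℝ → ℝ) (x : ℝ) : ℝ :=
  ∫ t in (-1 : ℝ)..x, (x - t) ^ (s - 1) / (s - 1).factorial * (1 / w α β t) *
    ∫ y in t..(1 : ℝ), (y - t) ^ (s - k - 1) / (s - k - 1).factorial * g y * w α β y

/-- The `s`-th derivative of `u_{g,k}`, given by its explicit formula. -/
def uDs (α β : ℝ) (s k : ℕ) (g : ℝ → ℝ) (x : ℝ) : ℝ :=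
  (1 / w α β x) *
    ∫ y in x..(1 : ℝ), (y - x) ^ (s - k - 1) / (s - k - 1).factorial * g y * w α β y

/-!
Write `g = f - 𝒮_n f`. The polynomials `𝒥_k` with `k < s` interpolate the derivatives at `θ`, while
those with `k ≥ s` are the `s`-fold primitives of `J_{k-s}` vanishing to order `s` at `θ`. Hence `g`
vanishes to order `s` at `θ`, and `g^{(s)} = f^{(s)} - S_{n-s} f^{(s)}` is the error of the
Fourier–Jacobi partial sum. By orthogonality of the `J_k`, which are eigenfunctions with distinct
eigenvalues of a symmetric second order operator, that error is the best approximation error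
`E_{n-s}(f^{(s)})`.

It remains to bound the lower derivatives of `g` by `g^{(s)}`, which follows by iterating the
weighted Hardy inequality `‖h‖ ≤ C ‖deriv h‖` for `h θ = 0`. Cauchy–Schwarz on the segment from `θ`
to `x` reduces this inequality to a product bound `w x / w t ≤ A x * B t` with integrable `A` and
`B`, for `t` between `θ` and `x`. Such a bound exists unless `θ` is an endpoint at which the
exponent of the weight is at least `1`.
-/

section Hardy

theorem sq_integral_abs_mul_le {Ω : Type*} [MeasurableSpace Ω] {μ : Measure Ω} {f g : Ω → ℝ}
    (hf : MemLp f 2 μ) (hg : MemLp g 2 μ) :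
    (∫ x, |f x * g x| ∂μ) ^ 2 ≤ (∫ x, f x ^ 2 ∂μ) * ∫ x, g x ^ 2 ∂μ := by
  have holder : ∫ x, |f x * g x| ∂μ ≤ √(∫ x, f x ^ 2 ∂μ) * √(∫ x, g x ^ 2 ∂μ) := by
    have := integral_mul_norm_le_Lp_mul_Lq (f := f) (g := g) Real.HolderConjugate.two_two
      (by simpa using hf) (by simpa using hg)
    simpa [abs_mul, Real.sqrt_eq_rpow] using this
  calc (∫ x, |f x * g x| ∂μ) ^ 2 ≤ (√(∫ x, f x ^ 2 ∂μ) * √(∫ x, g x ^ 2 ∂μ)) ^ 2 :=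
        pow_le_pow_left₀ (integral_nonneg fun _ => abs_nonneg _) holder 2
    _ = (∫ x, f x ^ 2 ∂μ) * ∫ x, g x ^ 2 ∂μ := by
        rw [mul_pow, Real.sq_sqrt (integral_nonneg fun _ => sq_nonneg _),
          Real.sq_sqrt (integral_nonneg fun _ => sq_nonneg _)]

theorem sq_integral_abs_le_integral_mul_integral_inv {Ω : Type*} [MeasurableSpace Ω]
    {μ : Measure Ω} {h v : Ω → ℝ} (hv : ∀ᵐ x ∂μ, 0 < v x) (hh : AEStronglyMeasurable h μ)
    (hhv : Integrable (fun x => h x ^ 2 * v x) μ) (hv_inv : Integrable (fun x => (v x)⁻¹) μ) :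
    (∫ x, |h x| ∂μ) ^ 2 ≤ (∫ x, h x ^ 2 * v x ∂μ) * ∫ x, (v x)⁻¹ ∂μ := by
  have hv_meas : AEStronglyMeasurable v μ := by
    simpa only [Pi.inv_def, inv_inv] using hv_inv.aemeasurable.inv.aestronglyMeasurable
  have hf_sq : (fun x => (h x * √(v x)) ^ 2) =ᵐ[μ] fun x => h x ^ 2 * v x := by
    filter_upwards [hv] with x hx
    rw [mul_pow, Real.sq_sqrt hx.le]
  have hg_sq : (fun x => (√(v x)⁻¹) ^ 2) =ᵐ[μ] fun x => (v x)⁻¹ := by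
    filter_upwards [hv] with x hx
    rw [Real.sq_sqrt (inv_nonneg.2 hx.le)]
  have hf : MemLp (fun x => h x * √(v x)) 2 μ :=
    (memLp_two_iff_integrable_sq (hh.mul hv_meas.aemeasurable.sqrt.aestronglyMeasurable)).2
      (hhv.congr hf_sq.symm)
  have hg : MemLp (fun x => √(v x)⁻¹) 2 μ :=
    (memLp_two_iff_integrable_sq hv_meas.aemeasurable.inv.sqrt.aestronglyMeasurable).2
      (hv_inv.congr hg_sq.symm)
  have h_abs : (fun x => |h x * √(v x) * √(v x)⁻¹|) =ᵐ[μ] fun x => |h x| := by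
    filter_upwards [hv] with x hx
    rw [Real.sqrt_inv, mul_inv_cancel_right₀ (Real.sqrt_pos.2 hx).ne']
  rw [← integral_congr_ae h_abs, ← integral_congr_ae hf_sq, ← integral_congr_ae hg_sq]
  exact sq_integral_abs_mul_le hf hg

variable {a b θ : ℝ} {v A B g g' : ℝ → ℝ}

theorem uIoo_subset_Ioo_of_mem {x : ℝ} (hθ : θ ∈ Icc a b) (hx : x ∈ Ioo a b) :
    uIoo θ x ⊆ Ioo a b :=
  Ioo_subset_Ioo (le_min hθ.1 hx.1.le) (max_le hθ.2 hx.2.le)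

theorem abs_sub_le_integral_uIoo {x : ℝ} (hg : ∀ t ∈ uIcc θ x, HasDerivAt g (g' t) t)
    (hg' : IntervalIntegrable g' volume θ x) : |g x - g θ| ≤ ∫ t in uIoo θ x, |g' t| := by
  rw [← intervalIntegral.integral_eq_sub_of_hasDerivAt hg hg', uIoo, ← integral_Ioc_eq_integral_Ioo]
  exact intervalIntegral.norm_integral_le_integral_norm_uIoc (f := g') (μ := volume)

theorem mul_setIntegral_inv_le {x : ℝ} {I : Set ℝ} (hI : MeasurableSet I) (hIab : I ⊆ Ioo a b)
    (hv : ∀ t ∈ Ioo a b, 0 < v t) (hx : x ∈ Ioo a b)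
    (hA : 0 ≤ A x) (hB : IntegrableOn B (Ioo a b)) (hB_nonneg : ∀ t ∈ Ioo a b, 0 ≤ B t)
    (hvAB : ∀ t ∈ I, v x ≤ A x * B t * v t) :
    v x * ∫ t in I, (v t)⁻¹ ≤ A x * ∫ t in Ioo a b, B t := by
  rw [← integral_const_mul]
  calc ∫ t in I, v x * (v t)⁻¹ ≤ ∫ t in I, A x * B t := by
        refine integral_mono_of_nonneg ?_ ((hB.mono_set hIab).const_mul _) ?_ <;>
          filter_upwards [ae_restrict_mem hI] with t ht
        · exact mul_nonneg (hv x hx).le (inv_nonneg.2 (hv t (hIab ht)).le)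
        · exact (mul_inv_le_iff₀ (hv t (hIab ht))).2 (hvAB t ht)
    _ = A x * ∫ t in I, B t := integral_const_mul _ _
    _ ≤ A x * ∫ t in Ioo a b, B t := by
        refine mul_le_mul_of_nonneg_left (setIntegral_mono_set hB ?_ hIab.eventuallyLE) hA
        filter_upwards [ae_restrict_mem measurableSet_Ioo] with t ht using hB_nonneg t ht

theorem integrableOn_inv_of_kernel_bound {x : ℝ} {I : Set ℝ} (hI : MeasurableSet I)
    (hIab : I ⊆ Ioo a b) (hv : ∀ t ∈ Ioo a b, 0 < v t)
    (hv_meas : AEStronglyMeasurable v (volume.restrict (Ioo a b))) (hx : x ∈ Ioo a b)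
    (hB : IntegrableOn B (Ioo a b)) (hvAB : ∀ t ∈ I, v x ≤ A x * B t * v t) :
    IntegrableOn (fun t => (v t)⁻¹) I := by
  have hv_inv : AEStronglyMeasurable (fun t => (v t)⁻¹) (volume.restrict I) :=
    (hv_meas.mono_set hIab).aemeasurable.inv.aestronglyMeasurable
  refine Integrable.mono' ((hB.mono_set hIab).const_mul (A x / v x)) hv_inv ?_
  filter_upwards [ae_restrict_mem hI] with t ht
  have hvt := hv t (hIab ht)
  rw [Real.norm_of_nonneg (inv_nonneg.2 hvt.le), div_mul_eq_mul_div, le_div_iff₀ (hv x hx),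
    inv_mul_le_iff₀ hvt, mul_comm]
  exact hvAB t ht

theorem sq_mul_le_of_kernel_bound (hθ : θ ∈ Icc a b) (hv : ∀ t ∈ Ioo a b, 0 < v t)
    (hv_meas : AEStronglyMeasurable v (volume.restrict (Ioo a b)))
    (hB : IntegrableOn B (Ioo a b)) (hB_nonneg : ∀ t ∈ Ioo a b, 0 ≤ B t)
    (hg : ∀ t ∈ Icc a b, HasDerivAt g (g' t) t) (hg' : ContinuousOn g' (Icc a b)) (hgθ : g θ = 0)
    (hg'v : IntegrableOn (fun t => g' t ^ 2 * v t) (Ioo a b)) {x : ℝ} (hx : x ∈ Ioo a b)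
    (hA : 0 ≤ A x) (hvAB : ∀ t ∈ uIoo θ x, v x ≤ A x * B t * v t) :
    g x ^ 2 * v x ≤ A x * ((∫ t in Ioo a b, B t) * ∫ t in Ioo a b, g' t ^ 2 * v t) := by
  have hI := uIoo_subset_Ioo_of_mem hθ hx
  have hIcc : uIcc θ x ⊆ Icc a b := uIcc_subset_Icc hθ (Ioo_subset_Icc_self hx)
  have hg'θx : IntervalIntegrable g' volume θ x := (hg'.mono hIcc).intervalIntegrable
  have g_le : |g x| ≤ ∫ t in uIoo θ x, |g' t| := by
    simpa [hgθ] using abs_sub_le_integral_uIoo (fun t ht => hg t (hIcc ht)) hg'θx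
  have cauchy_schwarz : (∫ t in uIoo θ x, |g' t|) ^ 2 ≤
      (∫ t in uIoo θ x, g' t ^ 2 * v t) * ∫ t in uIoo θ x, (v t)⁻¹ :=
    sq_integral_abs_le_integral_mul_integral_inv
      (ae_restrict_of_forall_mem measurableSet_Ioo fun t ht => hv t (hI ht))
      ((hg'.mono (hI.trans Ioo_subset_Icc_self)).aestronglyMeasurable measurableSet_Ioo)
      (hg'v.mono_set hI)
      (integrableOn_inv_of_kernel_bound measurableSet_Ioo hI hv hv_meas hx hB hvAB)
  have energy_le : ∫ t in uIoo θ x, g' t ^ 2 * v t ≤ ∫ t in Ioo a b, g' t ^ 2 * v t := by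
    refine setIntegral_mono_set hg'v ?_ hI.eventuallyLE
    filter_upwards [ae_restrict_mem measurableSet_Ioo] with t ht
    exact mul_nonneg (sq_nonneg _) (hv t ht).le
  have kernel_nonneg : 0 ≤ v x * ∫ t in uIoo θ x, (v t)⁻¹ :=
    mul_nonneg (hv x hx).le
      (setIntegral_nonneg measurableSet_Ioo fun t ht => inv_nonneg.2 (hv t (hI ht)).le)
  have kernel_le : v x * ∫ t in uIoo θ x, (v t)⁻¹ ≤ A x * ∫ t in Ioo a b, B t :=
    mul_setIntegral_inv_le measurableSet_Ioo hI hv hx hA hB hB_nonneg hvAB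
  calc g x ^ 2 * v x
      ≤ ((∫ t in uIoo θ x, g' t ^ 2 * v t) * ∫ t in uIoo θ x, (v t)⁻¹) * v x := by
        rw [← sq_abs (g x)]
        exact mul_le_mul_of_nonneg_right
          ((pow_le_pow_left₀ (abs_nonneg _) g_le 2).trans cauchy_schwarz) (hv x hx).le
    _ = (v x * ∫ t in uIoo θ x, (v t)⁻¹) * ∫ t in uIoo θ x, g' t ^ 2 * v t := by ring
    _ ≤ (A x * ∫ t in Ioo a b, B t) * ∫ t in Ioo a b, g' t ^ 2 * v t :=
        mul_le_mul kernel_le energy_le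
          (setIntegral_nonneg measurableSet_Ioo fun t ht =>
            mul_nonneg (sq_nonneg _) (hv t (hI ht)).le)
          (kernel_nonneg.trans kernel_le)
    _ = A x * ((∫ t in Ioo a b, B t) * ∫ t in Ioo a b, g' t ^ 2 * v t) := by ring

theorem weighted_hardy_of_kernel_bound (hθ : θ ∈ Icc a b) (hv : ∀ t ∈ Ioo a b, 0 < v t)
    (hv_meas : AEStronglyMeasurable v (volume.restrict (Ioo a b)))
    (hA : IntegrableOn A (Ioo a b)) (hA_nonneg : ∀ t ∈ Ioo a b, 0 ≤ A t)
    (hB : IntegrableOn B (Ioo a b)) (hB_nonneg : ∀ t ∈ Ioo a b, 0 ≤ B t)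
    (hvAB : ∀ x ∈ Ioo a b, ∀ t ∈ uIoo θ x, v x ≤ A x * B t * v t)
    (hg : ∀ t ∈ Icc a b, HasDerivAt g (g' t) t) (hg' : ContinuousOn g' (Icc a b)) (hgθ : g θ = 0)
    (hg'v : IntegrableOn (fun t => g' t ^ 2 * v t) (Ioo a b)) :
    ∫ x in Ioo a b, g x ^ 2 * v x ≤
      (∫ x in Ioo a b, A x) * (∫ t in Ioo a b, B t) * ∫ t in Ioo a b, g' t ^ 2 * v t := by
  rw [mul_assoc, ← integral_mul_const]
  refine integral_mono_of_nonneg ?_ (hA.mul_const _) ?_ <;>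
    filter_upwards [ae_restrict_mem measurableSet_Ioo] with x hx
  · exact mul_nonneg (sq_nonneg _) (hv x hx).le
  · exact sq_mul_le_of_kernel_bound hθ hv hv_meas hB hB_nonneg hg hg' hgθ hg'v hx
      (hA_nonneg x hx) (hvAB x hx)

end Hardy

section JacobiWeight

variable {α β : ℝ}

theorem w_pos (α β : ℝ) {x : ℝ} (hx : x ∈ Ioo (-1 : ℝ) 1) : 0 < w α β x :=
  mul_pos (Real.rpow_pos_of_pos (sub_pos.2 hx.2) _)
    (Real.rpow_pos_of_pos (neg_lt_iff_pos_add'.1 hx.1) _)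

theorem ae_restrict_w_pos (α β : ℝ) : ∀ᵐ x ∂volume.restrict (Ioo (-1) 1), 0 < w α β x :=
  ae_restrict_of_forall_mem measurableSet_Ioo fun _ => w_pos α β

theorem w_neg (α β x : ℝ) : w α β (-x) = w β α x := by
  rw [w, w, sub_neg_eq_add, ← sub_eq_add_neg, mul_comm]

theorem intervalIntegrable_w_left (α : ℝ) (hβ : -1 < β) :
    IntervalIntegrable (w α β) volume (-1) 0 := by
  have right_factor : IntervalIntegrable (fun x : ℝ => (1 + x) ^ β) volume (-1) 0 := by
    simpa using (intervalIntegral.intervalIntegrable_rpow' (a := 0) (b := 1) hβ).comp_add_left 1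
  refine right_factor.continuousOn_mul (ContinuousOn.rpow_const (by fun_prop) fun x hx => .inl ?_)
  rw [uIcc_of_le (by norm_num)] at hx
  linarith [hx.2]

theorem intervalIntegrable_w (hα : -1 < α) (hβ : -1 < β) :
    IntervalIntegrable (w α β) volume (-1) 1 := by
  refine (intervalIntegrable_w_left α hβ).trans ?_
  simpa [w_neg] using ((IntervalIntegrable.iff_comp_neg).1 (intervalIntegrable_w_left β hα)).symm

theorem integrableOn_mul_w (hα : -1 < α) (hβ : -1 < β) {g : ℝ → ℝ} (hg : Continuous g) :
    IntegrableOn (fun x => g x * w α β x) (Ioo (-1) 1) :=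
  (intervalIntegrable_iff_integrableOn_Ioo_of_le (by norm_num)).1
    ((intervalIntegrable_w hα hβ).continuousOn_mul hg.continuousOn)

theorem integrableOn_w (hα : -1 < α) (hβ : -1 < β) : IntegrableOn (w α β) (Ioo (-1) 1) := by
  simpa using integrableOn_mul_w hα hβ continuous_const (g := fun _ => 1)

-- In the application, `u` and `v` are the distances from `x` and from a point `t` between `θ` and
-- `x` to the same endpoint of `(-1, 1)`, and `d` is the distance from `θ` to that endpoint.
theorem exists_rpow_le_mul_rpow {γ L d : ℝ} (hγ : -1 < γ) (hL : 0 < L) (hd : 0 < d ∨ γ < 1) :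
    ∃ C a b : ℝ, 0 < C ∧ -1 < a ∧ -1 < b ∧ ∀ u ∈ Ioo 0 L, ∀ v ∈ Ioo 0 L, min u d ≤ v →
      u ^ γ ≤ C * u ^ a * v ^ b * v ^ γ := by
  rcases le_or_gt γ 0 with hγ0 | hγ0
  · refine ⟨L ^ (-γ), γ, 0, by positivity, hγ, by norm_num, fun u hu v hv _ => ?_⟩
    have one_le : 1 ≤ L ^ (-γ) * v ^ γ := by
      rw [Real.rpow_neg hL.le, one_le_inv_mul₀ (by positivity)]
      exact Real.rpow_le_rpow_of_nonpos hv.1 hv.2.le hγ0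
    have := le_mul_of_one_le_right (Real.rpow_nonneg hu.1.le γ) one_le
    rwa [Real.rpow_zero, mul_one, mul_right_comm, mul_comm]
  rcases hd with hd | hγ1
  · refine ⟨(max 1 (L / d)) ^ γ, 0, 0, by positivity, by norm_num, by norm_num,
      fun u hu v hv huv => ?_⟩
    have u_le : u ≤ max 1 (L / d) * v := by
      rcases min_le_iff.1 huv with h | h
      · exact h.trans (le_mul_of_one_le_left hv.1.le (le_max_left _ _))
      · calc u ≤ L / d * d := by rw [div_mul_cancel₀ _ hd.ne']; exact hu.2.le
          _ ≤ max 1 (L / d) * v := mul_le_mul (le_max_right _ _) h hd.le (by positivity)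
    simpa [Real.mul_rpow (le_max_of_le_left zero_le_one) hv.1.le] using
      Real.rpow_le_rpow hu.1.le u_le hγ0.le
  · refine ⟨L ^ γ, 0, -γ, by positivity, by norm_num, by linarith, fun u hu v hv _ => ?_⟩
    rw [mul_assoc _ (v ^ (-γ)), ← Real.rpow_add hv.1, neg_add_cancel, Real.rpow_zero,
      Real.rpow_zero, mul_one, mul_one]
    exact Real.rpow_le_rpow hu.1.le hu.2.le hγ0.le

theorem exists_w_kernel_bound (hα : -1 < α) (hβ : -1 < β) {θ : ℝ} (hθ : θ ∈ Icc (-1 : ℝ) 1)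
    (hθα : θ < 1 ∨ α < 1) (hθβ : -1 < θ ∨ β < 1) :
    ∃ A B : ℝ → ℝ, IntegrableOn A (Ioo (-1) 1) ∧ IntegrableOn B (Ioo (-1) 1) ∧
      (∀ x ∈ Ioo (-1 : ℝ) 1, 0 ≤ A x) ∧ (∀ x ∈ Ioo (-1 : ℝ) 1, 0 ≤ B x) ∧
      ∀ x ∈ Ioo (-1 : ℝ) 1, ∀ t ∈ uIoo θ x, w α β x ≤ A x * B t * w α β t := by
  obtain ⟨C₁, a₁, b₁, hC₁, ha₁, hb₁, right_bound⟩ :=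
    exists_rpow_le_mul_rpow hα two_pos (hθα.imp_left sub_pos.2)
  obtain ⟨C₂, a₂, b₂, hC₂, ha₂, hb₂, left_bound⟩ :=
    exists_rpow_le_mul_rpow hβ two_pos (hθβ.imp_left neg_lt_iff_pos_add'.1)
  refine ⟨fun x => C₁ * C₂ * w a₁ a₂ x, w b₁ b₂, (integrableOn_w ha₁ ha₂).const_mul _,
    integrableOn_w hb₁ hb₂, fun x hx => mul_nonneg (by positivity) (w_pos _ _ hx).le,
    fun x hx => (w_pos _ _ hx).le, fun x hx t ht => ?_⟩
  have ht' := uIoo_subset_Ioo_of_mem hθ hx ht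
  have right_endpoint := right_bound (1 - x) ⟨by linarith [hx.2], by linarith [hx.1]⟩
    (1 - t) ⟨by linarith [ht'.2], by linarith [ht'.1]⟩
    (by rw [min_comm, min_sub_sub_left]; linarith [ht.2])
  have left_endpoint := left_bound (1 + x) ⟨by linarith [hx.1], by linarith [hx.2]⟩
    (1 + t) ⟨by linarith [ht'.1], by linarith [ht'.2]⟩
    (by rw [min_comm, min_add_add_left]; linarith [ht.1])
  calc w α β x
      ≤ (C₁ * (1 - x) ^ a₁ * (1 - t) ^ b₁ * (1 - t) ^ α) *
          (C₂ * (1 + x) ^ a₂ * (1 + t) ^ b₂ * (1 + t) ^ β) :=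
        mul_le_mul right_endpoint left_endpoint (Real.rpow_nonneg (by linarith [hx.1]) _)
          ((Real.rpow_nonneg (by linarith [hx.2]) _).trans right_endpoint)
    _ = C₁ * C₂ * w a₁ a₂ x * w b₁ b₂ t * w α β t := by simp only [w]; ring

theorem ip_self_nonneg (α β : ℝ) (f : ℝ → ℝ) : 0 ≤ ip α β f f :=
  setIntegral_nonneg measurableSet_Ioo fun _ hx => mul_nonneg (mul_self_nonneg _) (w_pos _ _ hx).le

theorem LpW_two_eq_sqrt (α β : ℝ) (f : ℝ → ℝ) : LpW α β 2 f = √(ip α β f f) := by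
  rw [LpW, if_neg (by simp), ip, Real.sqrt_eq_rpow]
  simp [← sq]

theorem exists_ip_le_mul_ip_deriv (hα : -1 < α) (hβ : -1 < β) {θ : ℝ} (hθ : θ ∈ Icc (-1 : ℝ) 1)
    (hθα : θ < 1 ∨ α < 1) (hθβ : -1 < θ ∨ β < 1) :
    ∃ C : ℝ, 0 ≤ C ∧ ∀ g : ℝ → ℝ, ContDiff ℝ 1 g → g θ = 0 →
      ip α β g g ≤ C * ip α β (deriv g) (deriv g) := by
  obtain ⟨A, B, hA, hB, hA_nonneg, hB_nonneg, hAB⟩ := exists_w_kernel_bound hα hβ hθ hθα hθβ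
  refine ⟨(∫ x in Ioo (-1) 1, A x) * ∫ t in Ioo (-1) 1, B t,
    mul_nonneg (setIntegral_nonneg measurableSet_Ioo hA_nonneg)
      (setIntegral_nonneg measurableSet_Ioo hB_nonneg), fun g hg hgθ => ?_⟩
  have hg' : Continuous (deriv g) := hg.continuous_deriv le_rfl
  simp only [ip, ← sq]
  exact weighted_hardy_of_kernel_bound hθ (fun _ => w_pos α β)
    (integrableOn_w hα hβ).aestronglyMeasurable hA hA_nonneg hB hB_nonneg hAB
    (fun t _ => (hg.differentiable one_ne_zero t).hasDerivAt) hg'.continuousOn hgθ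
    (integrableOn_mul_w hα hβ (hg'.pow 2))

end JacobiWeight

section BestApproximation

variable {K V ι : Type*} [Field K] [AddCommGroup V] [Module K V] {B : LinearMap.BilinForm K V}
  {e : ι → V}

/-- The Fourier partial sum of `v` over the indices in `s`, with respect to a family `e` that is
meant to be orthogonal for the bilinear form `B`. -/
def fourierSum (B : LinearMap.BilinForm K V) (e : ι → V) (s : Finset ι) (v : V) : V :=
  ∑ k ∈ s, (B v (e k) / B (e k) (e k)) • e k

theorem fourierSum_mem_span (B : LinearMap.BilinForm K V) (e : ι → V) (s : Finset ι) (v : V) :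
    fourierSum B e s v ∈ Submodule.span K (e '' s) :=
  Submodule.sum_mem _ fun _ hk => Submodule.smul_mem _ _ (Submodule.subset_span ⟨_, hk, rfl⟩)

theorem bilin_sub_fourierSum_eq_zero (he : B.IsOrthoᵢ e) {s : Finset ι}
    (he₀ : ∀ k ∈ s, B (e k) (e k) ≠ 0) (v : V) {y : V} (hy : y ∈ Submodule.span K (e '' s)) :
    B (v - fourierSum B e s v) y = 0 := by
  suffices Submodule.span K (e '' s) ≤ LinearMap.ker (B (v - fourierSum B e s v)) from this hy
  rw [Submodule.span_le]
  rintro _ ⟨k, hk, rfl⟩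
  simp only [SetLike.mem_coe, LinearMap.mem_ker, fourierSum, map_sub, map_sum, map_smul,
    LinearMap.sub_apply, LinearMap.sum_apply, LinearMap.smul_apply, smul_eq_mul]
  rw [Finset.sum_eq_single_of_mem k hk fun j _ hjk => by rw [he hjk, mul_zero],
    div_mul_cancel₀ _ (he₀ k hk), sub_self]

theorem bilin_sub_fourierSum_self_le [LinearOrder K] [IsStrictOrderedRing K] (hB : B.IsPosSemidef)
    (he : B.IsOrthoᵢ e) {s : Finset ι} (he₀ : ∀ k ∈ s, B (e k) (e k) ≠ 0) (v : V) {y : V}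
    (hy : y ∈ Submodule.span K (e '' s)) :
    B (v - fourierSum B e s v) (v - fourierSum B e s v) ≤ B (v - y) (v - y) := by
  set r := v - fourierSum B e s v with hr
  set d := fourierSum B e s v - y with hd
  have ortho : B r d = 0 := bilin_sub_fourierSum_eq_zero he he₀ v
    (Submodule.sub_mem _ (fourierSum_mem_span B e s v) hy)
  have pythagoras : B (v - y) (v - y) = B r r + B d d := by
    have : v - y = r + d := by rw [hr, hd, sub_add_sub_cancel]
    simp [this, ortho, hB.isSymm.eq d r]
  rw [pythagoras]
  exact le_add_of_nonneg_right (hB.isNonneg.nonneg d)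

end BestApproximation

section JacobiPolynomial

open Polynomial

theorem poch_eq_ascPochhammer_eval (a : ℝ) (k : ℕ) : poch a k = (ascPochhammer ℝ k).eval a := by
  induction k with
  | zero => simp [poch]
  | succ k ih => rw [poch, Finset.prod_range_succ, ← poch, ih, ascPochhammer_succ_eval]

theorem ordinaryHypergeometricCoefficient_succ {K : Type*} [Field K] [CharZero K] (a b : K) {c : K}
    {k : ℕ} (hc : c + k ≠ 0) :
    (k + 1) * (c + k) * ordinaryHypergeometricCoefficient a b c (k + 1) =
      (a + k) * (b + k) * ordinaryHypergeometricCoefficient a b c k := by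
  have hk : (k : K) + 1 ≠ 0 := k.cast_add_one_ne_zero
  simp only [ordinaryHypergeometricCoefficient, ascPochhammer_succ_eval, Nat.factorial_succ,
    Nat.cast_mul, Nat.cast_add, Nat.cast_one, mul_inv]
  field_simp

/-- The terminating Gauss hypergeometric series `₂F₁(-n, b; c; X)`. -/
def hypergeometricPoly {K : Type*} [Field K] (n : ℕ) (b c : K) : K[X] :=
  ∑ k ∈ Finset.range (n + 1), monomial k (ordinaryHypergeometricCoefficient (-(n : K)) b c k)

section Hypergeometric

variable {K : Type*} [Field K]

theorem coeff_hypergeometricPoly (n : ℕ) (b c : K) (k : ℕ) :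
    (hypergeometricPoly n b c).coeff k = ordinaryHypergeometricCoefficient (-(n : K)) b c k := by
  rw [hypergeometricPoly, finsetSum_coeff]
  simp only [coeff_monomial, Finset.sum_ite_eq', Finset.mem_range]
  split_ifs with hk
  · rfl
  · simp [ordinaryHypergeometricCoefficient,
      ascPochhammer_eval_neg_coe_nat_of_lt (R := K) (n := k) (k := n) (by lia)]

theorem degree_hypergeometricPoly [CharZero K] {n : ℕ} {b c : K}
    (hb : (ascPochhammer K n).eval b ≠ 0) (hc : (ascPochhammer K n).eval c ≠ 0) :
    (hypergeometricPoly n b c).degree = n := by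
  have ha : (ascPochhammer K n).eval (-(n : K)) ≠ 0 := by
    rw [Ne, ascPochhammer_eval_eq_zero_iff]
    rintro ⟨k, hk, hkn⟩
    exact hk.ne (by simpa using hkn)
  refine degree_eq_of_le_of_coeff_ne_zero (degree_le_of_natDegree_le
    (natDegree_sum_le_of_forall_le _ _ fun k hk => (natDegree_monomial_le _).trans ?_)) ?_
  · exact Nat.lt_succ_iff.1 (Finset.mem_range.1 hk)
  · rw [coeff_hypergeometricPoly]
    exact mul_ne_zero (mul_ne_zero (mul_ne_zero
      (inv_ne_zero (Nat.cast_ne_zero.2 n.factorial_ne_zero)) ha) hb) (inv_ne_zero hc)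

theorem hypergeometricPoly_ode [CharZero K] (n : ℕ) (b : K) {c : K} (hc : ∀ k : ℕ, c + k ≠ 0) :
    X * derivative (derivative (hypergeometricPoly n b c))
      - X * (X * derivative (derivative (hypergeometricPoly n b c)))
      + C c * derivative (hypergeometricPoly n b c)
      - C (b - n + 1) * (X * derivative (hypergeometricPoly n b c))
      + C (n * b) * hypergeometricPoly n b c = 0 := by
  ext k
  have recurrence := ordinaryHypergeometricCoefficient_succ (-(n : K)) b (hc k)
  rcases k with _ | _ | k <;>
    simp only [coeff_add, coeff_sub, coeff_C_mul, coeff_X_mul, coeff_X_mul_zero, coeff_derivative,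
      coeff_hypergeometricPoly, coeff_zero] <;>
    push_cast at recurrence ⊢ <;> linear_combination recurrence

end Hypergeometric

variable {α β : ℝ}

/-- The polynomial underlying the renormalized Jacobi function `J α β n`. -/
def jacobiPoly (α β : ℝ) (n : ℕ) : ℝ[X] :=
  C (2 ^ n / poch (n + α + β + 1) n * (poch (α + 1) n / n.factorial)) *
    (hypergeometricPoly n (n + α + β + 1) (α + 1)).comp (C (1 / 2) * (1 - X))

theorem eval_jacobiPoly (α β : ℝ) (n : ℕ) (t : ℝ) : (jacobiPoly α β n).eval t = J α β n t := by
  have half : eval t (C (1 / 2) * (1 - X)) = (1 - t) / 2 := by simp; ring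
  rw [jacobiPoly, eval_mul, eval_C, eval_comp, half, J, JP, ← mul_assoc, hypergeometricPoly,
    eval_finsetSum]
  congr 1
  refine Finset.sum_congr rfl fun k _ => ?_
  rw [eval_monomial, ordinaryHypergeometricCoefficient]
  simp only [poch_eq_ascPochhammer_eval]
  ring

theorem continuous_J (α β : ℝ) (n : ℕ) : Continuous (J α β n) := by
  simpa only [eval_jacobiPoly] using (jacobiPoly α β n).continuous

theorem poch_add_add_one_pos (hα : -1 < α) (hβ : -1 < β) (n : ℕ) : 0 < poch (n + α + β + 1) n := by
  rcases n with _ | n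
  · simp [poch]
  · rw [poch_eq_ascPochhammer_eval]
    exact ascPochhammer_pos _ _ (by push_cast; linarith [n.cast_nonneg (α := ℝ)])

theorem degree_jacobiPoly (hα : -1 < α) (hβ : -1 < β) (n : ℕ) : (jacobiPoly α β n).degree = n := by
  have hb := (poch_add_add_one_pos hα hβ n).ne'
  have hc : poch (α + 1) n ≠ 0 := by
    rw [poch_eq_ascPochhammer_eval]
    exact (ascPochhammer_pos _ _ (by linarith)).ne'
  have linear : (C (1 / 2 : ℝ) * (1 - X)).degree = 1 := by
    rw [degree_C_mul (by norm_num), ← neg_sub, degree_neg]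
    exact degree_X_sub_C 1
  have norm_ne_zero : 2 ^ n / poch (n + α + β + 1) n * (poch (α + 1) n / n.factorial) ≠ 0 := by
    positivity
  rw [jacobiPoly, degree_C_mul norm_ne_zero, degree_comp (by rw [linear]; exact one_pos), linear,
    degree_hypergeometricPoly (by rwa [← poch_eq_ascPochhammer_eval])
      (by rwa [← poch_eq_ascPochhammer_eval]), mul_one]

/-- The second order differential operator whose eigenfunctions are the Jacobi polynomials. -/
def jacobiOp (α β : ℝ) (p : ℝ[X]) : ℝ[X] :=
  (1 - X ^ 2) * derivative (derivative p) + (C (β - α) - C (α + β + 2) * X) * derivative p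

theorem jacobiOp_C_mul (α β a : ℝ) (p : ℝ[X]) :
    jacobiOp α β (C a * p) = C a * jacobiOp α β p := by
  simp only [jacobiOp, derivative_C_mul]
  ring

theorem derivative_comp_half_one_sub (p : ℝ[X]) :
    derivative (p.comp (C (1 / 2) * (1 - X))) =
      C (-1 / 2) * (derivative p).comp (C (1 / 2) * (1 - X)) := by
  rw [derivative_comp, derivative_C_mul, derivative_sub, derivative_one, derivative_X, zero_sub,
    mul_neg_one, ← C_neg, neg_div]

theorem jacobiOp_jacobiPoly (hα : -1 < α) (β : ℝ) (n : ℕ) :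
    jacobiOp α β (jacobiPoly α β n) = C (-(n * (n + α + β + 1))) * jacobiPoly α β n := by
  have hc (k : ℕ) : α + 1 + k ≠ 0 := ne_of_gt (by linarith [k.cast_nonneg (α := ℝ)])
  have ode := hypergeometricPoly_ode n (n + α + β + 1) hc
  set F := hypergeometricPoly n (n + α + β + 1) (α + 1)
  suffices jacobiOp α β (F.comp (C (1 / 2) * (1 - X))) =
      C (-(n * (n + α + β + 1))) * F.comp (C (1 / 2) * (1 - X)) by
    rw [jacobiPoly, jacobiOp_C_mul, this, mul_left_comm]
  refine Polynomial.funext fun t => ?_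
  have ode_t := congrArg (eval (1 / 2 * (1 - t))) ode
  simp only [eval_add, eval_sub, eval_mul, eval_X, eval_C, eval_zero] at ode_t
  simp only [jacobiOp, derivative_comp_half_one_sub, derivative_C_mul, eval_add, eval_sub,
    eval_mul, eval_comp, eval_C, eval_X, eval_one, eval_pow]
  linear_combination ode_t

theorem w_add_one (α β : ℝ) {x : ℝ} (hx : x ∈ Ioo (-1 : ℝ) 1) :
    w (α + 1) (β + 1) x = (1 - x ^ 2) * w α β x := by
  rw [w, w, Real.rpow_add_one (sub_pos.2 hx.2).ne',
    Real.rpow_add_one (neg_lt_iff_pos_add'.1 hx.1).ne']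
  ring

theorem hasDerivAt_w_add_one (α β : ℝ) {x : ℝ} (hx : x ∈ Ioo (-1 : ℝ) 1) :
    HasDerivAt (w (α + 1) (β + 1)) ((β - α - (α + β + 2) * x) * w α β x) x := by
  have h₁ : 0 < 1 - x := sub_pos.2 hx.2
  have h₂ : 0 < 1 + x := neg_lt_iff_pos_add'.1 hx.1
  refine ((((hasDerivAt_id x).const_sub 1).rpow_const (p := α + 1) (.inl h₁.ne')).mul
    (((hasDerivAt_id x).const_add 1).rpow_const (p := β + 1) (.inl h₂.ne'))).congr_deriv ?_
  simp only [id, w, add_sub_cancel_right, Real.rpow_add_one h₁.ne', Real.rpow_add_one h₂.ne']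
  ring

theorem continuous_w_add_one (hα : -1 < α) (hβ : -1 < β) : Continuous (w (α + 1) (β + 1)) :=
  (Continuous.rpow_const (by fun_prop) fun _ => .inr (by linarith)).mul
    (Continuous.rpow_const (by fun_prop) fun _ => .inr (by linarith))

theorem hasDerivAt_derivative_eval_mul_w_add_one (α β : ℝ) (p : ℝ[X]) {x : ℝ}
    (hx : x ∈ Ioo (-1 : ℝ) 1) :
    HasDerivAt (fun x => (derivative p).eval x * w (α + 1) (β + 1) x)
      ((jacobiOp α β p).eval x * w α β x) x := by
  refine (((derivative p).hasDerivAt x).mul (hasDerivAt_w_add_one α β hx)).congr_deriv ?_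
  simp only [w_add_one α β hx, jacobiOp, eval_add, eval_mul, eval_sub, eval_C, eval_X, eval_one,
    eval_pow]
  ring

theorem ip_jacobiOp (hα : -1 < α) (hβ : -1 < β) (p q : ℝ[X]) :
    ip α β (jacobiOp α β p).eval q.eval =
      -ip (α + 1) (β + 1) (derivative p).eval (derivative q).eval := by
  have w_one : w (α + 1) (β + 1) 1 = 0 := by
    rw [w, sub_self, Real.zero_rpow (by linarith), zero_mul]
  have w_neg_one : w (α + 1) (β + 1) (-1) = 0 := by
    rw [w, add_neg_cancel, Real.zero_rpow (x := β + 1) (by linarith), mul_zero]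
  have by_parts := intervalIntegral.integral_mul_deriv_eq_deriv_mul_of_hasDerivAt
    (u := fun x => (derivative p).eval x * w (α + 1) (β + 1) x)
    ((derivative p).continuous.mul (continuous_w_add_one hα hβ)).continuousOn
    q.continuous.continuousOn
    (fun x hx => hasDerivAt_derivative_eval_mul_w_add_one α β p (by simpa using hx))
    (fun x _ => q.hasDerivAt x)
    ((intervalIntegrable_w hα hβ).continuousOn_mul (jacobiOp α β p).continuous.continuousOn)
    ((derivative q).continuous.intervalIntegrable _ _)
  simp only [w_one, w_neg_one, mul_zero, zero_mul, sub_zero, zero_sub,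
    intervalIntegral.integral_of_le (show (-1 : ℝ) ≤ 1 by norm_num),
    integral_Ioc_eq_integral_Ioo, mul_right_comm _ (w _ _ _)] at by_parts
  rw [ip, ip, by_parts, neg_neg]

theorem ip_comm (α β : ℝ) (f g : ℝ → ℝ) : ip α β f g = ip α β g f := by
  simp only [ip, mul_comm (f _)]

theorem ip_jacobiOp_comm (hα : -1 < α) (hβ : -1 < β) (p q : ℝ[X]) :
    ip α β (jacobiOp α β p).eval q.eval = ip α β p.eval (jacobiOp α β q).eval := by
  rw [ip_comm _ _ p.eval, ip_jacobiOp hα hβ, ip_jacobiOp hα hβ, ip_comm]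

theorem ip_J_of_ne (hα : -1 < α) (hβ : -1 < β) {n m : ℕ} (hnm : n ≠ m) :
    ip α β (J α β n) (J α β m) = 0 := by
  have ip_eigen (k l : ℕ) : ip α β (jacobiOp α β (jacobiPoly α β k)).eval (jacobiPoly α β l).eval =
      -(k * (k + α + β + 1)) * ip α β (J α β k) (J α β l) := by
    simp only [jacobiOp_jacobiPoly hα, eval_mul, eval_C, eval_jacobiPoly, ip, mul_assoc,
      integral_const_mul]
  have symmetric := ip_jacobiOp_comm hα hβ (jacobiPoly α β n) (jacobiPoly α β m)
  rw [ip_comm _ _ (jacobiPoly α β n).eval, ip_eigen, ip_eigen, ip_comm _ _ (J α β m)] at symmetric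
  have eigenvalues_mul : ((n - m : ℝ) * (n + m + α + β + 1)) * ip α β (J α β n) (J α β m) = 0 := by
    linear_combination -symmetric
  have one_le : (1 : ℝ) ≤ n + m := by exact_mod_cast (by lia : 1 ≤ n + m)
  have sum_pos : 0 < (n + m + α + β + 1 : ℝ) := by linarith
  exact (mul_eq_zero.1 eigenvalues_mul).resolve_left
    (mul_ne_zero (sub_ne_zero.2 (Nat.cast_injective.ne hnm)) sum_pos.ne')

theorem ip_eval_self_pos (hα : -1 < α) (hβ : -1 < β) {p : ℝ[X]} (hp : p ≠ 0) :
    0 < ip α β p.eval p.eval := by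
  have h_nonneg : 0 ≤ᵐ[volume.restrict (Ioo (-1) 1)] fun x => p.eval x * p.eval x * w α β x := by
    filter_upwards [ae_restrict_w_pos α β] with x hx
    exact mul_nonneg (mul_self_nonneg _) hx.le
  have support_superset : Ioo (-1) 1 \ {x | p.IsRoot x} ⊆
      Function.support (fun x => p.eval x * p.eval x * w α β x) ∩ Ioo (-1) 1 := by
    rintro x ⟨hx, hpx⟩
    exact ⟨mul_ne_zero (mul_self_ne_zero.2 hpx) (w_pos α β hx).ne', hx⟩
  rw [ip, setIntegral_pos_iff_support_of_nonneg_ae h_nonneg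
    (integrableOn_mul_w hα hβ (p.continuous.mul p.continuous))]
  refine lt_of_lt_of_le ?_ (measure_mono support_superset)
  rw [measure_sdiff_null ((finite_setOfPred_isRoot hp).measure_zero _)]
  simp

end JacobiPolynomial

section FourierJacobi

open Polynomial

variable {α β : ℝ}

/-- The inner product `ip α β` as a bilinear form on the continuous functions, on which the
defining integral converges. -/
def jacobiForm (hα : -1 < α) (hβ : -1 < β) : LinearMap.BilinForm ℝ C(ℝ, ℝ) :=
  LinearMap.mk₂ ℝ (fun f g => ip α β f g)
    (fun f₁ f₂ g => by
      simpa [ip, add_mul] using integral_add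
        (integrableOn_mul_w hα hβ (f₁.continuous.mul g.continuous))
        (integrableOn_mul_w hα hβ (f₂.continuous.mul g.continuous)))
    (fun c f g => by simp [ip, mul_assoc, integral_const_mul])
    (fun f g₁ g₂ => by
      simpa [ip, mul_add, add_mul] using integral_add
        (integrableOn_mul_w hα hβ (f.continuous.mul g₁.continuous))
        (integrableOn_mul_w hα hβ (f.continuous.mul g₂.continuous)))
    (fun c f g => by simp [ip, mul_assoc, mul_left_comm _ c, integral_const_mul])

theorem jacobiForm_apply (hα : -1 < α) (hβ : -1 < β) (f g : C(ℝ, ℝ)) :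
    jacobiForm hα hβ f g = ip α β f g :=
  rfl

theorem isPosSemidef_jacobiForm (hα : -1 < α) (hβ : -1 < β) : (jacobiForm hα hβ).IsPosSemidef where
  eq f g := ip_comm α β f g
  nonneg f := ip_self_nonneg α β f

theorem hJ_pos (hα : -1 < α) (hβ : -1 < β) (n : ℕ) : 0 < hJ α β n := by
  have hp : jacobiPoly α β n ≠ 0 := fun h => by simpa [h] using degree_jacobiPoly hα hβ n
  simpa only [eval_jacobiPoly, hJ] using ip_eval_self_pos hα hβ hp

/-- The renormalized Jacobi function `J α β n` as an element of `C(ℝ, ℝ)`. -/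
def jacobiMap (α β : ℝ) (n : ℕ) : C(ℝ, ℝ) := ⟨J α β n, continuous_J α β n⟩

theorem fourierSum_jacobiMap (hα : -1 < α) (hβ : -1 < β) (m : ℕ) (f : C(ℝ, ℝ)) :
    ⇑(fourierSum (jacobiForm hα hβ) (jacobiMap α β) (Finset.range (m + 1)) f) = S α β m f := by
  ext x
  simp [fourierSum, S, coeff, hJ, jacobiForm_apply, jacobiMap]

theorem toContinuousMap_mem_span_jacobiMap (hα : -1 < α) (hβ : -1 < β) {m : ℕ} {q : ℝ[X]}
    (hq : q.natDegree ≤ m) :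
    q.toContinuousMap ∈
      Submodule.span ℝ (jacobiMap α β '' (Finset.range (m + 1) : Finset ℕ)) := by
  let jacobiSequence : Polynomial.Sequence ℝ := ⟨jacobiPoly α β, degree_jacobiPoly hα hβ⟩
  have span_eq := jacobiSequence.span_degreeLE (m := m)
    fun i _ => (leadingCoeff_ne_zero.2 (jacobiSequence.ne_zero i)).isUnit
  have hq_mem : q ∈ Submodule.span ℝ (jacobiPoly α β '' Iic m) :=
    span_eq.ge (mem_degreeLE.2 (degree_le_of_natDegree_le hq))
  have image_mem :=
    Submodule.mem_map_of_mem (f := (toContinuousMapAlgHom (R := ℝ)).toLinearMap) hq_mem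
  have jacobiMap_eq : jacobiMap α β =
      fun k => (toContinuousMapAlgHom (R := ℝ)).toLinearMap (jacobiPoly α β k) := by
    ext k x
    simp [jacobiMap, eval_jacobiPoly]
  have range_eq : (Finset.range (m + 1) : Set ℕ) = Iic m := by
    rw [Nat.range_succ_eq_Iic, Finset.coe_Iic]
  rw [Submodule.map_span, image_image, ← jacobiMap_eq, ← range_eq] at image_mem
  exact image_mem

theorem LpW_two_sub_S_le (hα : -1 < α) (hβ : -1 < β) {m : ℕ} {f : ℝ → ℝ} (hf : Continuous f)
    {q : ℝ[X]} (hq : q.natDegree ≤ m) :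
    LpW α β 2 (fun x => f x - S α β m f x) ≤ LpW α β 2 (fun x => f x - q.eval x) := by
  have orthogonal : (jacobiForm hα hβ).IsOrthoᵢ (jacobiMap α β) :=
    fun _ _ hkl => ip_J_of_ne hα hβ hkl
  have best := bilin_sub_fourierSum_self_le (isPosSemidef_jacobiForm hα hβ) orthogonal
    (fun k _ => (hJ_pos hα hβ k).ne') ⟨f, hf⟩
    (toContinuousMap_mem_span_jacobiMap hα hβ hq)
  rw [jacobiForm_apply, jacobiForm_apply, ContinuousMap.coe_sub, ContinuousMap.coe_sub,
    fourierSum_jacobiMap] at best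
  rw [LpW_two_eq_sqrt, LpW_two_eq_sqrt]
  exact Real.sqrt_le_sqrt best

theorem LpW_two_sub_S_le_E (hα : -1 < α) (hβ : -1 < β) (m : ℕ) {f : ℝ → ℝ} (hf : Continuous f) :
    LpW α β 2 (fun x => f x - S α β m f x) ≤ E α β 2 m f := by
  refine le_csInf ⟨_, 0, by simp, rfl⟩ ?_
  rintro _ ⟨q, hq, rfl⟩
  exact LpW_two_sub_S_le hα hβ hf hq

end FourierJacobi

section Primitive

variable {θ : ℝ} {h : ℝ → ℝ}

/-- The primitive of `h` vanishing at `θ`; its iterates are the `n`-fold primitives vanishing to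
order `n` at `θ`. -/
def primitive (θ : ℝ) (h : ℝ → ℝ) (x : ℝ) : ℝ := ∫ t in θ..x, h t

theorem hasDerivAt_primitive (hh : Continuous h) (x : ℝ) : HasDerivAt (primitive θ h) (h x) x :=
  (hh.integral_hasStrictDerivAt θ x).hasDerivAt

theorem deriv_primitive (hh : Continuous h) : deriv (primitive θ h) = h :=
  funext fun x => (hasDerivAt_primitive hh x).deriv

theorem contDiff_iterate_primitive (hh : Continuous h) (n : ℕ) :
    ContDiff ℝ n ((primitive θ)^[n] h) := by
  induction n with
  | zero => simpa using hh
  | succ n ih =>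
    rw [Function.iterate_succ_apply', Nat.cast_succ, contDiff_succ_iff_deriv,
      deriv_primitive ih.continuous]
    exact ⟨fun x => (hasDerivAt_primitive ih.continuous x).differentiableAt, by simp, ih⟩

theorem iteratedDeriv_iterate_primitive (hh : Continuous h) {k n : ℕ} (hkn : k ≤ n) :
    iteratedDeriv k ((primitive θ)^[n] h) = (primitive θ)^[n - k] h := by
  induction k with
  | zero => simp
  | succ k ih =>
    obtain ⟨m, rfl⟩ := Nat.exists_eq_add_of_lt hkn
    rw [iteratedDeriv_succ, ih (by lia), show k + m + 1 - k = m + 1 by lia,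
      show k + m + 1 - (k + 1) = m by lia, Function.iterate_succ_apply',
      deriv_primitive (contDiff_iterate_primitive hh m).continuous]

theorem iterate_primitive_self (h : ℝ → ℝ) {n : ℕ} (hn : n ≠ 0) :
    (primitive θ)^[n] h θ = 0 := by
  obtain ⟨m, rfl⟩ := Nat.exists_eq_succ_of_ne_zero hn
  rw [Function.iterate_succ_apply', primitive, intervalIntegral.integral_same]

theorem iteratedDeriv_iterate_primitive_self (hh : Continuous h) {k n : ℕ} (hkn : k < n) :
    iteratedDeriv k ((primitive θ)^[n] h) θ = 0 := by
  rw [iteratedDeriv_iterate_primitive hh hkn.le, iterate_primitive_self h (by lia)]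

theorem iterate_primitive_succ_apply (hh : Continuous h) (m : ℕ) (x : ℝ) :
    (primitive θ)^[m + 1] h x = ∫ t in θ..x, (x - t) ^ m / m.factorial * h t := by
  rcases eq_or_ne θ x with rfl | hθx
  · rw [iterate_primitive_self h m.succ_ne_zero, intervalIntegral.integral_same]
  have smooth : ContDiff ℝ (m + 1 : ℕ) ((primitive θ)^[m + 1] h) :=
    contDiff_iterate_primitive hh (m + 1)
  have derivWithin_eq {k : ℕ} (hk : k ≤ m + 1) {t : ℝ} (ht : t ∈ uIcc θ x) :
      iteratedDerivWithin k ((primitive θ)^[m + 1] h) (uIcc θ x) t =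
        (primitive θ)^[m + 1 - k] h t := by
    rw [iteratedDerivWithin_eq_iteratedDeriv (uniqueDiffOn_uIcc hθx)
      (smooth.of_le (mod_cast hk)).contDiffAt ht, iteratedDeriv_iterate_primitive hh hk]
  have taylor_eq_zero : taylorWithinEval ((primitive θ)^[m + 1] h) m (uIcc θ x) θ x = 0 := by
    rw [taylor_within_apply]
    refine Finset.sum_eq_zero fun k hk => ?_
    have hk : k < m + 1 := Finset.mem_range.1 hk
    rw [derivWithin_eq hk.le left_mem_uIcc, iterate_primitive_self h (by lia), smul_zero]
  have remainder := taylor_integral_remainder (smooth.contDiffOn (s := uIcc θ x))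
  rw [taylor_eq_zero, sub_zero] at remainder
  rw [remainder]
  refine intervalIntegral.integral_congr fun t ht => ?_
  simp only [derivWithin_eq le_rfl ht, Nat.sub_self, Function.iterate_zero_apply, smul_eq_mul]

end Primitive

section SobolevJacobi

variable (α β θ : ℝ) (lam : ℕ → ℝ) {s n k : ℕ}

theorem iteratedDeriv_sub_pow_div_factorial (n k : ℕ) :
    iteratedDeriv k (fun x => (x - θ) ^ n / n.factorial) =
      fun x => n.descFactorial k * (x - θ) ^ (n - k) / n.factorial := by
  ext x
  rw [iteratedDeriv_div_const, iteratedDeriv_comp_sub_const k (· ^ n) θ]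
  simp only [iteratedDeriv_pow]

theorem SJ_of_lt (hn : n < s) :
    SJ α β s θ n = fun x => (x - θ) ^ n / n.factorial :=
  funext fun _ => if_pos hn

theorem SJ_of_le (hs : 1 ≤ s) (hn : s ≤ n) :
    SJ α β s θ n = (primitive θ)^[s] (J α β (n - s)) := by
  obtain ⟨m, rfl⟩ := Nat.exists_eq_add_of_le' hs
  ext x
  rw [iterate_primitive_succ_apply (continuous_J α β _)]
  exact if_neg hn.not_gt

theorem contDiff_SJ (hs : 1 ≤ s) (n : ℕ) : ContDiff ℝ s (SJ α β s θ n) := by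
  rcases lt_or_ge n s with hn | hn
  · rw [SJ_of_lt α β θ hn]
    fun_prop
  · rw [SJ_of_le α β θ hs hn]
    exact contDiff_iterate_primitive (continuous_J α β _) s

theorem iteratedDeriv_SJ_of_lt (hn : n < s) : iteratedDeriv s (SJ α β s θ n) = 0 := by
  rw [SJ_of_lt α β θ hn, iteratedDeriv_sub_pow_div_factorial, Nat.descFactorial_of_lt hn]
  ext x
  simp

theorem iteratedDeriv_SJ_of_le (hs : 1 ≤ s) (hn : s ≤ n) :
    iteratedDeriv s (SJ α β s θ n) = J α β (n - s) := by
  rw [SJ_of_le α β θ hs hn, iteratedDeriv_iterate_primitive (continuous_J α β _) le_rfl,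
    Nat.sub_self, Function.iterate_zero_apply]

theorem iteratedDeriv_SJ_self (hk : k < s) (n : ℕ) :
    iteratedDeriv k (SJ α β s θ n) θ = if k = n then 1 else 0 := by
  rcases lt_or_ge n s with hn | hn
  · rw [SJ_of_lt α β θ hn, iteratedDeriv_sub_pow_div_factorial]
    rcases lt_trichotomy k n with hkn | rfl | hkn
    · simp [hkn.ne, (Nat.sub_pos_of_lt hkn).ne']
    · simp [Nat.descFactorial_self, Nat.factorial_ne_zero]
    · simp [hkn.ne', Nat.descFactorial_of_lt hkn]
  · rw [SJ_of_le α β θ (by lia) hn,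
      iteratedDeriv_iterate_primitive_self (continuous_J α β _) hk, if_neg (by lia)]

theorem ipS_SJ_of_lt (hn : n < s) (f : ℝ → ℝ) :
    ipS α β s θ lam f (SJ α β s θ n) = lam n * iteratedDeriv n f θ := by
  have diagonal : ∀ k ∈ Finset.range s,
      lam k * iteratedDeriv k f θ * iteratedDeriv k (SJ α β s θ n) θ =
        if k = n then lam n * iteratedDeriv n f θ else 0 := fun k hk => by
    rw [iteratedDeriv_SJ_self α β θ (Finset.mem_range.1 hk)]
    split_ifs with hkn <;> simp [hkn]
  rw [ipS, iteratedDeriv_SJ_of_lt α β θ hn, Finset.sum_congr rfl diagonal]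
  simp [ip, hn]

theorem ipS_SJ_of_le (hs : 1 ≤ s) (hn : s ≤ n) (f : ℝ → ℝ) :
    ipS α β s θ lam f (SJ α β s θ n) = ip α β (iteratedDeriv s f) (J α β (n - s)) := by
  rw [ipS, iteratedDeriv_SJ_of_le α β θ hs hn, Finset.sum_eq_zero, add_zero]
  intro k hk
  have hk : k < s := Finset.mem_range.1 hk
  rw [iteratedDeriv_SJ_self α β θ hk, if_neg (by lia), mul_zero]

variable {lam} in
theorem coeffS_of_lt (hn : n < s) (hlam : lam n ≠ 0) (f : ℝ → ℝ) :
    coeffS α β s θ lam n f = iteratedDeriv n f θ := by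
  rw [coeffS, ipS_SJ_of_lt α β θ lam hn, ipS_SJ_of_lt α β θ lam hn,
    iteratedDeriv_SJ_self α β θ hn, if_pos rfl, mul_one, mul_div_cancel_left₀ _ hlam]

theorem coeffS_of_le (hs : 1 ≤ s) (hn : s ≤ n) (f : ℝ → ℝ) :
    coeffS α β s θ lam n f = coeff α β (n - s) (iteratedDeriv s f) := by
  rw [coeffS, ipS_SJ_of_le α β θ lam hs hn, ipS_SJ_of_le α β θ lam hs hn,
    iteratedDeriv_SJ_of_le α β θ hs hn, coeff, hJ]

theorem contDiff_SS (hs : 1 ≤ s) (n : ℕ) (f : ℝ → ℝ) : ContDiff ℝ s (SS α β s θ lam n f) :=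
  ContDiff.sum fun k _ => contDiff_const.mul (contDiff_SJ α β θ hs k)

theorem iteratedDeriv_SS_apply (hs : 1 ≤ s) (hk : k ≤ s) (n : ℕ) (f : ℝ → ℝ) (x : ℝ) :
    iteratedDeriv k (SS α β s θ lam n f) x =
      ∑ j ∈ Finset.range (n + 1), coeffS α β s θ lam j f * iteratedDeriv k (SJ α β s θ j) x := by
  have smooth (j : ℕ) : ContDiffAt ℝ k (SJ α β s θ j) x :=
    ((contDiff_SJ α β θ hs j).of_le (mod_cast hk)).contDiffAt
  unfold SS
  rw [iteratedDeriv_fun_sum fun j _ => contDiffAt_const.mul (smooth j)]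
  simp only [iteratedDeriv_const_mul_field]

variable {lam} in
theorem iteratedDeriv_SS_self (hk : k < s) (hkn : k ≤ n) (hlam : lam k ≠ 0) (f : ℝ → ℝ) :
    iteratedDeriv k (SS α β s θ lam n f) θ = iteratedDeriv k f θ := by
  rw [iteratedDeriv_SS_apply α β θ lam (by lia) hk.le, Finset.sum_eq_single_of_mem k (by simp; lia),
    iteratedDeriv_SJ_self α β θ hk, if_pos rfl, mul_one, coeffS_of_lt α β θ hk hlam]
  intro j _ hjk
  rw [iteratedDeriv_SJ_self α β θ hk, if_neg hjk.symm, mul_zero]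

theorem iteratedDeriv_SS (hs : 1 ≤ s) (hn : s ≤ n) (f : ℝ → ℝ) :
    iteratedDeriv s (SS α β s θ lam n f) = S α β (n - s) (iteratedDeriv s f) := by
  obtain ⟨m, rfl⟩ := Nat.exists_eq_add_of_le hn
  ext x
  have low_degree_eq_zero : ∀ j ∈ Finset.range s,
      coeffS α β s θ lam j f * iteratedDeriv s (SJ α β s θ j) x = 0 := fun j hj => by
    rw [iteratedDeriv_SJ_of_lt α β θ (Finset.mem_range.1 hj), Pi.zero_apply, mul_zero]
  rw [iteratedDeriv_SS_apply α β θ lam hs le_rfl, add_assoc, Finset.sum_range_add,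
    Finset.sum_eq_zero low_degree_eq_zero, zero_add, Nat.add_sub_cancel_left]
  refine Finset.sum_congr rfl fun j _ => ?_
  rw [coeffS_of_le α β θ lam hs (Nat.le_add_right s j),
    iteratedDeriv_SJ_of_le α β θ hs (Nat.le_add_right s j), Nat.add_sub_cancel_left]

end SobolevJacobi

section SobolevNorm

variable {α β θ : ℝ} {s : ℕ}

theorem WNorm_two_eq_sqrt (α β : ℝ) (s : ℕ) (g : ℝ → ℝ) :
    WNorm α β 2 s g =
      √(∑ k ∈ Finset.range (s + 1), ip α β (iteratedDeriv k g) (iteratedDeriv k g)) := by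
  rw [WNorm, if_neg (by simp), Real.sqrt_eq_rpow]
  simp only [LpW_two_eq_sqrt, ENNReal.toReal_ofNat, Real.rpow_ofNat,
    Real.sq_sqrt (ip_self_nonneg α β _)]

theorem exists_ip_iteratedDeriv_le (hα : -1 < α) (hβ : -1 < β) (hθ : θ ∈ Icc (-1) 1)
    (hθα : θ < 1 ∨ α < 1) (hθβ : -1 < θ ∨ β < 1) :
    ∃ C, 1 ≤ C ∧ ∀ (s : ℕ) (g : ℝ → ℝ), ContDiff ℝ s g →
      (∀ k < s, iteratedDeriv k g θ = 0) → ∀ k ≤ s,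
        ip α β (iteratedDeriv k g) (iteratedDeriv k g) ≤
          C ^ (s - k) * ip α β (iteratedDeriv s g) (iteratedDeriv s g) := by
  obtain ⟨C, -, hardy⟩ := exists_ip_le_mul_ip_deriv hα hβ hθ hθα hθβ
  refine ⟨max C 1, le_max_right C 1, fun s g smooth vanishing k hk => ?_⟩
  induction hk using Nat.decreasingInduction with
  | self => simp
  | of_succ k hk ih =>
    have smooth_k : ContDiff ℝ 1 (iteratedDeriv k g) := by
      rw [iteratedDeriv_eq_iterate]
      exact ContDiff.iterate_deriv' 1 k (smooth.of_le (mod_cast (by lia : 1 + k ≤ s)))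
    calc ip α β (iteratedDeriv k g) (iteratedDeriv k g)
      _ ≤ C * ip α β (iteratedDeriv (k + 1) g) (iteratedDeriv (k + 1) g) := by
        rw [iteratedDeriv_succ]
        exact hardy _ smooth_k (vanishing k hk)
      _ ≤ max C 1 * (max C 1 ^ (s - (k + 1)) *
            ip α β (iteratedDeriv s g) (iteratedDeriv s g)) := by
        gcongr
        · exact ip_self_nonneg α β _
        · exact le_max_left C 1
      _ = max C 1 ^ (s - k) * ip α β (iteratedDeriv s g) (iteratedDeriv s g) := by
        rw [← mul_assoc, ← pow_succ', show s - (k + 1) + 1 = s - k by lia]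

theorem exists_WNorm_two_le_LpW_iteratedDeriv (hα : -1 < α) (hβ : -1 < β) (hθ : θ ∈ Icc (-1) 1)
    (hθα : θ < 1 ∨ α < 1) (hθβ : -1 < θ ∨ β < 1) (s : ℕ) :
    ∃ c, 0 < c ∧ ∀ g : ℝ → ℝ, ContDiff ℝ s g → (∀ k < s, iteratedDeriv k g θ = 0) →
      WNorm α β 2 s g ≤ c * LpW α β 2 (iteratedDeriv s g) := by
  obtain ⟨C, hC, chain⟩ := exists_ip_iteratedDeriv_le hα hβ hθ hθα hθβ
  have sum_pos : 0 < ∑ k ∈ Finset.range (s + 1), C ^ (s - k) :=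
    Finset.sum_pos (fun k _ => by positivity) ⟨0, by simp⟩
  refine ⟨√(∑ k ∈ Finset.range (s + 1), C ^ (s - k)), Real.sqrt_pos.2 sum_pos,
    fun g smooth vanishing => ?_⟩
  rw [WNorm_two_eq_sqrt, LpW_two_eq_sqrt, ← Real.sqrt_mul sum_pos.le, Finset.sum_mul]
  refine Real.sqrt_le_sqrt (Finset.sum_le_sum fun k hk => ?_)
  exact chain s g smooth vanishing k (Finset.mem_range_succ_iff.1 hk)

end SobolevNorm

theorem statement16_general {α β θ : ℝ} (hα : -1 < α) (hβ : -1 < β) {s : ℕ} (hs : 1 ≤ s)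
    (hθ : θ ∈ Ioo (-1 : ℝ) 1 ∨ (θ = -1 ∧ β < 1) ∨ (θ = 1 ∧ α < 1)) :
    ∃ c : ℝ, 0 < c ∧ ∀ lam : ℕ → ℝ, (∀ k < s, lam k ≠ 0) → ∀ f : ℝ → ℝ, MemW α β 2 s f →
      ∀ n : ℕ, s ≤ n → WNorm α β 2 s (fun x => f x - SS α β s θ lam n f x)
        ≤ c * E α β 2 (n - s) (iteratedDeriv s f) := by
  have hθ_mem : θ ∈ Icc (-1) 1 ∧ (θ < 1 ∨ α < 1) ∧ (-1 < θ ∨ β < 1) := by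
    rcases hθ with hθ | ⟨rfl, hβ1⟩ | ⟨rfl, hα1⟩
    · exact ⟨Ioo_subset_Icc_self hθ, .inl hθ.2, .inl hθ.1⟩
    · norm_num [hβ1]
    · norm_num [hα1]
  obtain ⟨hθ_mem, hθα, hθβ⟩ := hθ_mem
  obtain ⟨c, hc, WNorm_le⟩ := exists_WNorm_two_le_LpW_iteratedDeriv hα hβ hθ_mem hθα hθβ s
  refine ⟨c, hc, fun lam hlam f hf n hn => ?_⟩
  have smooth_f : ContDiff ℝ s f := hf.1
  have smooth_SS : ContDiff ℝ s (SS α β s θ lam n f) := contDiff_SS α β θ lam hs n f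
  have vanishing : ∀ k < s, iteratedDeriv k (fun x => f x - SS α β s θ lam n f x) θ = 0 := by
    intro k hk
    rw [iteratedDeriv_fun_sub (smooth_f.of_le (mod_cast hk.le)).contDiffAt
      (smooth_SS.of_le (mod_cast hk.le)).contDiffAt,
      iteratedDeriv_SS_self α β θ hk (hk.le.trans hn) (hlam k hk), sub_self]
  have top_derivative : iteratedDeriv s (fun x => f x - SS α β s θ lam n f x) =
      fun x => iteratedDeriv s f x - S α β (n - s) (iteratedDeriv s f) x := by
    ext x
    rw [iteratedDeriv_fun_sub smooth_f.contDiffAt smooth_SS.contDiffAt,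
      iteratedDeriv_SS α β θ lam hs hn]
  refine (WNorm_le _ (smooth_f.sub smooth_SS) vanishing).trans ?_
  rw [top_derivative]
  gcongr
  exact LpW_two_sub_S_le_E hα hβ (n - s) (smooth_f.continuous_iteratedDeriv s le_rfl)

theorem statement16 (α β : ℝ) (hα : -1 < α) (hβ : -1 < β) (s : ℕ) (hs : 1 ≤ s)
    (lam : ℕ → ℝ) (hlam : ∀ k, k < s → 0 < lam k) (θ : ℝ)
    (hθ : θ ∈ Ioo (-1 : ℝ) 1 ∨ (θ = -1 ∧ β < 1) ∨ (θ = 1 ∧ α < 1)) :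
    ∃ c : ℝ, 0 < c ∧ ∀ f : ℝ → ℝ, MemW α β 2 s f → ∀ n : ℕ, s ≤ n →
      WNorm α β 2 s (fun x => f x - SS α β s θ lam n f x)
        ≤ c * E α β 2 (n - s) (iteratedDeriv s f) :=
  (statement16_general hα hβ hs hθ).imp fun _ hc =>
    ⟨hc.1, hc.2 lam fun k hk => (hlam k hk).ne'⟩

end JacobiApprox
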